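/- The function u(x,y) = x·tanh(y) + sech(y) (where sech(y) = 1/cosh(y)) satisfies the partial differential equation ∂u/∂y + u·∂u/∂x = x at every point (x,y) ∈ ℝ², together with the initial condition u(x,0) = 1 for every x ∈ ℝ. Concretely: for all x, y ∈ ℝ, (x·sech(y)² − sech(y)·tanh(y)) + (x·tanh(y) + sech(y))·tanh(y) = x, where x·sech(y)² − sech(y)·tanh(y) is the derivative of y ↦ x·tanh(y) + sech(y) and tanh(y) is the derivative of x ↦ x·tanh(y) + sech(y). -/

import Mathlib

open Real

theorem tanh_sq_add_one_div_cosh_sq (y : ℝ) : tanh y ^ 2 + (1 / cosh y) ^ 2 = 1 := by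
  have hcosh : cosh y ≠ 0 := (cosh_pos y).ne'
  rw [tanh_eq_sinh_div_cosh]
  field_simp
  exact (cosh_sq y).symm

theorem hasDerivAt_tanh (y : ℝ) : HasDerivAt tanh ((1 / cosh y) ^ 2) y := by
  have hquot : HasDerivAt (fun t => sinh t / cosh t)
      ((cosh y * cosh y - sinh y * sinh y) / cosh y ^ 2) y :=
    (hasDerivAt_sinh y).fun_div (hasDerivAt_cosh y) (cosh_pos y).ne'
  have hderiv : (cosh y * cosh y - sinh y * sinh y) / cosh y ^ 2 = (1 / cosh y) ^ 2 := by
    rw [← sq, ← sq, cosh_sq_sub_sinh_sq, one_div_pow]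
  simpa only [← tanh_eq_sinh_div_cosh, hderiv] using hquot

theorem hasDerivAt_one_div_cosh (y : ℝ) :
    HasDerivAt (fun t => 1 / cosh t) (-(1 / cosh y * tanh y)) y := by
  have hinv : HasDerivAt (fun t => (cosh t)⁻¹) (-sinh y / cosh y ^ 2) y :=
    (hasDerivAt_cosh y).fun_inv (cosh_pos y).ne'
  have hderiv : -sinh y / cosh y ^ 2 = -(1 / cosh y * tanh y) := by
    rw [tanh_eq_sinh_div_cosh]
    ring
  simpa only [one_div, hderiv] using hinv

/-- The function `u(x,y) = x·tanh y + sech y` solves `∂u/∂y + u·∂u/∂x = x`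
with initial condition `u(x,0) = 1`. -/
theorem stmt_0 :
    (∀ x y : ℝ,
      HasDerivAt (fun y' : ℝ => x * Real.tanh y' + 1 / Real.cosh y')
        (x * (1 / Real.cosh y) ^ 2 - (1 / Real.cosh y) * Real.tanh y) y ∧
      HasDerivAt (fun x' : ℝ => x' * Real.tanh y + 1 / Real.cosh y) (Real.tanh y) x ∧
      (x * (1 / Real.cosh y) ^ 2 - (1 / Real.cosh y) * Real.tanh y) +
        (x * Real.tanh y + 1 / Real.cosh y) * Real.tanh y = x) ∧
    (∀ x : ℝ, x * Real.tanh 0 + 1 / Real.cosh 0 = 1) := by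
  refine ⟨fun x y => ⟨?deriv_y, ?deriv_x, ?pde⟩, fun x => ?initial⟩
  case deriv_y =>
    simpa only [← sub_eq_add_neg] using
      ((hasDerivAt_tanh y).const_mul x).fun_add (hasDerivAt_one_div_cosh y)
  case deriv_x => exact (hasDerivAt_mul_const (tanh y)).add_const (1 / cosh y)
  case pde => linear_combination x * tanh_sq_add_one_div_cosh_sq y
  case initial => rw [tanh_zero, cosh_zero, mul_zero, zero_add, div_one]
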